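/- arXiv:2407.02780 — 2 statements merged into one kernel-verified Lean document; each statement's English description precedes it below -/
import Mathlib

section
/- Let v ∈ V and let M and N be distinct m-dimensional totally singular subspaces of V with L := M ∩ N of dimension m−1. Then: (i) v + (M \ L) and v + (N \ L) are cliques of VO(Q), each of size q^m − q^{m−1}; (ii) no vertex of v + (M \ L) is adjacent to any vertex of v + (N \ L); and (iii) the function f : V → ℝ equal to 1 on v + (M \ L), to −1 on v + (N \ L), and to 0 elsewhere satisfies (q^m − q^{m−1} − 1)·f(γ) = Σ_{δ adjacent to γ} f(δ) for every vertex γ ∈ V. -/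
/-!
Write `c = γ - v`. The function `f` is the difference of the indicators of `v + M` and `v + N`,
because these cancel on `v + (M ⊓ N)`. The neighbour sum at `γ` is therefore
`a_M(c) - a_N(c) - f γ`, where `a_K(c)` is the number of `w ∈ K` with `Q (w - c) = 0`.

For `K` totally singular and `w ∈ K`, `Q (w - c) = Q c - polar Q w c`. If `c ∈ K` then all `q ^ m`
vectors of `K` count. If `c ∉ K`, then, since `K` is its own orthogonal complement
(`mem_of_polar_eq_zero`), `w ↦ polar Q w c` is a nonzero functional on `K` and exactly `q ^ (m - 1)`
vectors count (`ncard_of_notMem`). Hence `a_K(c) = q ^ (m - 1) + (q ^ m - q ^ (m - 1)) 1_K(c)`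
(`sum_indicator`), which gives the eigenvalue equation.

Non-adjacency follows from the same count: for `x ∈ M \ N`, the `q ^ (m - 1)` vectors `w ∈ N` with
`Q (w - x) = 0` are exactly those of `M ⊓ N` (`mem_inf_of_singular`).
-/

open Module

/-- The affine polar graph `VO(Q)`: vertex set `V`, distinct `u, w` adjacent iff
`Q (u - w) = 0` (since `Q (w - u) = Q (u - w)`, symmetrizing is harmless). -/
def affinePolarGraph {F V : Type*} [Field F] [AddCommGroup V] [Module F V]
    (Q : QuadraticForm F V) : SimpleGraph V :=
  SimpleGraph.fromRel (fun u w => Q (u - w) = 0)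

/-- The fibres of a nonzero linear functional are affine hyperplanes, with `q ^ (dim - 1)` points each. -/
lemma ncard_fiber {F U : Type*} [Field F] [Finite F] [AddCommGroup U] [Module F U] [Finite U]
    (φ : U →ₗ[F] F) (hφ : φ ≠ 0) (a : F) :
    {u | φ u = a}.ncard = Nat.card F ^ (finrank F U - 1) := by
  obtain ⟨u₀, hu₀⟩ := LinearMap.surjective hφ a
  have hker : finrank F (LinearMap.ker φ) = finrank F U - 1 := by
    have h := LinearMap.finrank_range_add_finrank_ker φ
    rw [LinearMap.range_eq_top.2 (LinearMap.surjective hφ), finrank_top, finrank_self] at h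
    omega
  have himg : {u | φ u = a} = (u₀ + ·) '' (LinearMap.ker φ : Set U) := by
    ext u
    simp only [Set.mem_ofPred_eq, Set.mem_image, SetLike.mem_coe, LinearMap.mem_ker]
    constructor
    · intro h
      exact ⟨u - u₀, by rw [map_sub, h, hu₀, sub_self], by abel⟩
    · rintro ⟨k, hk, rfl⟩
      rw [map_add, hk, hu₀, add_zero]
  rw [himg, Set.ncard_image_of_injective _ (add_right_injective u₀), ← hker,
    ← Module.natCard_eq_pow_finrank (K := F)]
  rfl

/-- A totally singular subspace of half the dimension is its own orthogonal complement; only the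
inclusion `Mᗮ ≤ M` is needed. -/
lemma mem_of_polar_eq_zero {F V : Type*} [Field F] [AddCommGroup V] [Module F V]
    [FiniteDimensional F V] {m : ℕ} (hV : finrank F V = 2 * m) (Q : QuadraticForm F V)
    (hnd : ∀ x : V, (∀ y : V, QuadraticMap.polar Q x y = 0) → x = 0)
    (M : Submodule F V) (hM : ∀ x ∈ M, Q x = 0) (hMdim : finrank F M = m)
    {c : V} (hc : ∀ w ∈ M, QuadraticMap.polar Q w c = 0) : c ∈ M := by
  have hnondeg : LinearMap.BilinForm.Nondegenerate (QuadraticMap.polarBilin Q) := by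
    refine ⟨fun x hx => hnd x hx, fun x hx => hnd x fun y => ?_⟩
    rw [QuadraticMap.polar_comm]
    exact hx y
  have hdim := LinearMap.BilinForm.finrank_orthogonal hnondeg M
  have hle : M ≤ LinearMap.BilinForm.orthogonal (QuadraticMap.polarBilin Q) M := by
    intro x hx y hy
    simp [QuadraticMap.polar, hM _ (M.add_mem hy hx), hM _ hx, hM _ hy]
  have heq := Submodule.eq_of_le_of_finrank_eq hle (by omega)
  rw [heq]
  exact hc

/-- For `c ∉ M`, the condition `Q (w - c) = 0` on `w ∈ M` is the affine equation
`polar Q w c = Q c`, given by a nonzero functional on `M`. -/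
lemma ncard_of_notMem {F V : Type*} [Field F] [Finite F] [AddCommGroup V] [Module F V] [Finite V]
    {m : ℕ} (hV : finrank F V = 2 * m) (Q : QuadraticForm F V)
    (hnd : ∀ x : V, (∀ y : V, QuadraticMap.polar Q x y = 0) → x = 0)
    (M : Submodule F V) (hM : ∀ x ∈ M, Q x = 0) (hMdim : finrank F M = m)
    {c : V} (hc : c ∉ M) :
    {w | w ∈ M ∧ Q (w - c) = 0}.ncard = Nat.card F ^ (m - 1) := by
  let φ : M →ₗ[F] F := (QuadraticMap.polarBilin Q c).comp M.subtype
  have hφ : φ ≠ 0 := by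
    intro h
    refine hc (mem_of_polar_eq_zero hV Q hnd M hM hMdim fun w hw => ?_)
    rw [QuadraticMap.polar_comm]
    exact LinearMap.congr_fun h ⟨w, hw⟩
  rw [← hMdim, ← ncard_fiber φ hφ (Q c), ← Set.ncard_image_of_injective _ Subtype.val_injective]
  congr 1
  ext w
  have key : w ∈ M → Q (w - c) = Q c - QuadraticMap.polar Q c w := fun hw => by
    rw [sub_eq_add_neg, QuadraticMap.map_add Q w, hM w hw, QuadraticMap.map_neg,
      QuadraticMap.polar_neg_right, QuadraticMap.polar_comm Q w c]
    ring
  simp only [Set.mem_ofPred_eq, Set.mem_image, Subtype.exists, exists_and_right, exists_eq_right]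
  constructor
  · rintro ⟨hw, h⟩
    refine ⟨hw, ?_⟩
    rw [key hw, sub_eq_zero] at h
    exact h.symm
  · rintro ⟨hw, h⟩
    refine ⟨hw, ?_⟩
    rw [key hw, sub_eq_zero]
    exact h.symm

open Classical in
/-- The number of `w ∈ M` with `Q (w - c) = 0` depends only on whether `c` lies in `M`. -/
lemma sum_indicator {F V : Type*} [Field F] [Finite F] [AddCommGroup V] [Module F V] [Fintype V]
    {m : ℕ} (hV : finrank F V = 2 * m) (Q : QuadraticForm F V)
    (hnd : ∀ x : V, (∀ y : V, QuadraticMap.polar Q x y = 0) → x = 0)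
    (M : Submodule F V) (hM : ∀ x ∈ M, Q x = 0) (hMdim : finrank F M = m) (c : V) :
    ∑ w : V, (if w ∈ M ∧ Q (w - c) = 0 then (1 : ℝ) else 0) =
      (Nat.card F : ℝ) ^ (m - 1) +
        ((Nat.card F : ℝ) ^ m - (Nat.card F : ℝ) ^ (m - 1)) * (if c ∈ M then 1 else 0) := by
  have hsum : ∑ w : V, (if w ∈ M ∧ Q (w - c) = 0 then (1 : ℝ) else 0) =
      ({w | w ∈ M ∧ Q (w - c) = 0}.ncard : ℝ) := by
    rw [Finset.sum_boole, Set.ncard_eq_toFinset_card']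
    simp
  rw [hsum]
  by_cases hc : c ∈ M
  · have hset : {w | w ∈ M ∧ Q (w - c) = 0} = (M : Set V) := by
      ext w
      exact ⟨fun h => h.1, fun h => ⟨h, hM _ (M.sub_mem h hc)⟩⟩
    have hcard : (M : Set V).ncard = Nat.card F ^ m := by
      rw [← hMdim, ← Module.natCard_eq_pow_finrank (K := F)]
      rfl
    rw [hset, hcard, if_pos hc]
    push_cast
    ring
  · rw [ncard_of_notMem hV Q hnd M hM hMdim hc, if_neg hc]
    push_cast
    ring

lemma adj_iff {F V : Type*} [Field F] [AddCommGroup V] [Module F V] (Q : QuadraticForm F V)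
    (x y : V) : (affinePolarGraph Q).Adj x y ↔ x ≠ y ∧ Q (y - x) = 0 := by
  simp [affinePolarGraph, SimpleGraph.fromRel_adj, QuadraticMap.map_sub Q x y]

lemma isClique_translate {F V : Type*} [Field F] [AddCommGroup V] [Module F V]
    (Q : QuadraticForm F V) (M L : Submodule F V) (hM : ∀ x ∈ M, Q x = 0) (v : V) :
    (affinePolarGraph Q).IsClique ((v + ·) '' ((M : Set V) \ (L : Set V))) := by
  rintro _ ⟨x, hx, rfl⟩ _ ⟨y, hy, rfl⟩ hne
  rw [adj_iff]
  refine ⟨hne, ?_⟩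
  rw [add_sub_add_left_eq_sub]
  exact hM _ (M.sub_mem hy.1 hx.1)

lemma ncard_translate {F V : Type*} [Field F] [Finite F] [AddCommGroup V] [Module F V] [Finite V]
    (M L : Submodule F V) (hL : L ≤ M) (v : V) :
    ((v + ·) '' ((M : Set V) \ (L : Set V))).ncard =
      Nat.card F ^ finrank F M - Nat.card F ^ finrank F L := by
  rw [Set.ncard_image_of_injective _ (add_right_injective v), Set.ncard_sdiff hL,
    ← Module.natCard_eq_pow_finrank (K := F), ← Module.natCard_eq_pow_finrank (K := F)]
  rfl

/-- If `x ∈ M \ N`, the points `w ∈ N` with `Q (w - x) = 0` contain `M ⊓ N` and are equally many,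
so none lies outside `M ⊓ N`. -/
lemma mem_inf_of_singular {F V : Type*} [Field F] [Finite F] [AddCommGroup V] [Module F V]
    [Finite V] {m : ℕ} (hV : finrank F V = 2 * m) (Q : QuadraticForm F V)
    (hnd : ∀ x : V, (∀ y : V, QuadraticMap.polar Q x y = 0) → x = 0)
    (M N : Submodule F V) (hM : ∀ x ∈ M, Q x = 0) (hN : ∀ x ∈ N, Q x = 0)
    (hNdim : finrank F N = m) (hLdim : finrank F ↥(M ⊓ N) = m - 1)
    {x y : V} (hxM : x ∈ M) (hxN : x ∉ N) (hy : y ∈ N) (hxy : Q (y - x) = 0) : y ∈ M ⊓ N := by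
  have hsub : ((M ⊓ N : Submodule F V) : Set V) ⊆ {w | w ∈ N ∧ Q (w - x) = 0} :=
    fun w hw => ⟨hw.2, hM _ (M.sub_mem hw.1 hxM)⟩
  have hcard : ((M ⊓ N : Submodule F V) : Set V).ncard = Nat.card F ^ (m - 1) := by
    rw [← hLdim, ← Module.natCard_eq_pow_finrank (K := F)]
    rfl
  have heq := Set.eq_of_subset_of_ncard_le hsub
    (by rw [hcard, ncard_of_notMem hV Q hnd N hN hNdim hxN])
  have hmem : y ∈ ((M ⊓ N : Submodule F V) : Set V) := heq ▸ ⟨hy, hxy⟩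
  exact hmem

/-- hyperbolic case: for distinct `m`-dimensional totally singular `M, N` with
`L := M ⊓ N` of dimension `m-1`, the translates `v + (M \ L)` and `v + (N \ L)` are isolated
cliques of size `q^m - q^(m-1)`, and the associated `±1` function satisfies the eigenfunction
equation for `q^m - q^(m-1) - 1`. -/
theorem stmt8 {F V : Type*} [Field F] [Fintype F] [AddCommGroup V] [Module F V] [Finite V]
    (q m : ℕ) (hq : Fintype.card F = q) (hm : 1 ≤ m) (hV : finrank F V = 2 * m)
    (Q : QuadraticForm F V)
    (hnd : ∀ x : V, (∀ y : V, QuadraticMap.polar Q x y = 0) → x = 0)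
    (hhyp : ∃ W : Submodule F V, (∀ x ∈ W, Q x = 0) ∧ finrank F W = m)
    (v : V) (M N : Submodule F V) (hMN : M ≠ N)
    (hMts : ∀ x ∈ M, Q x = 0) (hNts : ∀ x ∈ N, Q x = 0)
    (hMdim : finrank F M = m) (hNdim : finrank F N = m)
    (hLdim : finrank F ↥(M ⊓ N) = m - 1)
    (S₀ S₁ : Set V)
    (hS₀ : S₀ = (v + ·) '' ((M : Set V) \ ((M ⊓ N : Submodule F V) : Set V)))
    (hS₁ : S₁ = (v + ·) '' ((N : Set V) \ ((M ⊓ N : Submodule F V) : Set V))) :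
    (affinePolarGraph Q).IsClique S₀ ∧ (affinePolarGraph Q).IsClique S₁ ∧
    S₀.ncard = q ^ m - q ^ (m - 1) ∧ S₁.ncard = q ^ m - q ^ (m - 1) ∧
    (∀ x ∈ S₀, ∀ y ∈ S₁, ¬(affinePolarGraph Q).Adj x y) ∧
    (∀ f : V → ℝ, (∀ z ∈ S₀, f z = 1) → (∀ z ∈ S₁, f z = -1) →
      (∀ z ∉ S₀ ∪ S₁, f z = 0) →
      ∀ γ : V, ((q : ℝ) ^ m - (q : ℝ) ^ (m - 1) - 1) * f γ =
        ∑ᶠ δ ∈ (affinePolarGraph Q).neighborSet γ, f δ) := by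
  classical
  have := Fintype.ofFinite V
  have hqc : Nat.card F = q := by rw [Nat.card_eq_fintype_card, hq]
  subst hS₀ hS₁
  refine ⟨isClique_translate Q M _ hMts v, isClique_translate Q N _ hNts v, ?_, ?_, ?_, ?_⟩
  · rw [ncard_translate M _ inf_le_left, hMdim, hLdim, hqc]
  · rw [ncard_translate N _ inf_le_right, hNdim, hLdim, hqc]
  · rintro _ ⟨x, hx, rfl⟩ _ ⟨y, hy, rfl⟩ hadj
    have h := ((adj_iff Q _ _).1 hadj).2
    rw [add_sub_add_left_eq_sub] at h
    exact hy.2 (mem_inf_of_singular hV Q hnd M N hMts hNts hNdim hLdim hx.1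
      (fun hxN => hx.2 ⟨hx.1, hxN⟩) hy.1 h)
  · intro f hf₀ hf₁ hf γ
    -- On the common part `v + (M ⊓ N)` the two indicators cancel.
    have hfeq : ∀ z, f z = (if z - v ∈ M then 1 else 0) - (if z - v ∈ N then 1 else 0) := by
      intro z
      have hz : v + (z - v) = z := by abel
      by_cases hM : z - v ∈ M <;> by_cases hN : z - v ∈ N
      · rw [hf z, if_pos hM, if_pos hN, sub_self]
        rintro (⟨x, hx, rfl⟩ | ⟨x, hx, rfl⟩) <;> rw [add_sub_cancel_left] at hM hN <;>
          exact hx.2 ⟨hM, hN⟩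
      · rw [hf₀ z ⟨z - v, ⟨hM, fun h => hN h.2⟩, hz⟩, if_pos hM, if_neg hN, sub_zero]
      · rw [hf₁ z ⟨z - v, ⟨hN, fun h => hM h.1⟩, hz⟩, if_neg hM, if_pos hN, zero_sub]
      · rw [hf z, if_neg hM, if_neg hN, sub_self]
        rintro (⟨x, hx, rfl⟩ | ⟨x, hx, rfl⟩) <;> rw [add_sub_cancel_left] at hM hN
        · exact hM hx.1
        · exact hN hx.1
    have hcount : ∀ K : Submodule F V, (∀ x ∈ K, Q x = 0) → finrank F K = m →
        ∑ δ : V, (if δ - v ∈ K ∧ Q (δ - γ) = 0 then (1 : ℝ) else 0) =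
          (q : ℝ) ^ (m - 1) +
            ((q : ℝ) ^ m - (q : ℝ) ^ (m - 1)) * (if γ - v ∈ K then 1 else 0) := by
      intro K hK hKdim
      rw [← hqc, ← sum_indicator hV Q hnd K hK hKdim (γ - v)]
      refine Fintype.sum_equiv (Equiv.subRight v) _ _ fun δ => ?_
      rw [Equiv.subRight_apply, sub_sub_sub_cancel_right]
    -- The sum over neighbours is the sum over all `δ` with `Q (δ - γ) = 0`, minus the term `δ = γ`.
    have hterm : ∀ δ : V, Set.indicator ((affinePolarGraph Q).neighborSet γ) f δ =
        (if δ - v ∈ M ∧ Q (δ - γ) = 0 then (1 : ℝ) else 0) -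
          (if δ - v ∈ N ∧ Q (δ - γ) = 0 then (1 : ℝ) else 0) - (if δ = γ then f γ else 0) := by
      intro δ
      simp only [Set.indicator_apply, SimpleGraph.mem_neighborSet, adj_iff]
      by_cases h : δ = γ
      · subst h
        simp [hfeq δ]
      · by_cases h' : Q (δ - γ) = 0 <;> simp [h, Ne.symm h, h', hfeq δ]
    rw [finsum_mem_def, finsum_eq_sum_of_fintype, Finset.sum_congr rfl fun δ _ => hterm δ,
      Finset.sum_sub_distrib, Finset.sum_sub_distrib, hcount M hMts hMdim, hcount N hNts hNdim,
      Finset.sum_ite_eq' Finset.univ γ, if_pos (Finset.mem_univ γ), hfeq γ]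
    ring
end

section
/- Let U be an (m−1)-dimensional totally singular subspace of V, and let v, z ∈ V. Then the number of vertices of v + U adjacent to z in VO(Q) equals q^{m−1} − 1 if z ∈ v + U, equals 0 if z ∈ (v + U^⊥) \ (v + U), and equals q^{m−2} if z ∉ v + U^⊥. -/
/-!
Put `w = z - v`. For `u ∈ U` one has `Q (w - u) = Q w - B(w, u)` because `Q u = 0`, so the
neighbours of `z` in `v + U` correspond to the `u ∈ U`, `u ≠ w`, with `B(w, u) = Q w`
(`ncard_neighbours`).
* If `w ∈ U`, both sides of `B(w, u) = Q w` vanish, and every `u ≠ w` counts.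
* If `w ∈ U^⊥ \ U`, a neighbour would force `Q w = 0`, making `U + ⟨w⟩` totally singular of
  dimension `m`, which ellipticity excludes (`singular_sup_span`, `finrank_sup_span`).
* If `w ∉ U^⊥`, the functional `B(w, ·)` on `U` is nonzero, and each of its fibres is a coset of
  a hyperplane of `U` (`ncard_fibre`); moreover `w ∉ U` since `U ⊆ U^⊥`.
-/

open Module

section

variable {F V : Type*} [Field F] [AddCommGroup V] [Module F V]

theorem polar_eq_zero_of_singular {Q : QuadraticForm F V} {U : Submodule F V}
    (hU : ∀ x ∈ U, Q x = 0) {x y : V} (hx : x ∈ U) (hy : y ∈ U) :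
    QuadraticMap.polar Q x y = 0 := by
  simp [QuadraticMap.polar, hU _ hx, hU _ hy, hU _ (U.add_mem hx hy)]

theorem map_sub_of_singular {Q : QuadraticForm F V} {u : V} (hu : Q u = 0) (w : V) :
    Q (w - u) = Q w - QuadraticMap.polar Q w u := by
  have h : Q (w + -u) = Q w + Q (-u) + QuadraticMap.polar Q w (-u) :=
    QuadraticMap.map_add Q w (-u)
  rw [QuadraticMap.map_neg, hu, QuadraticMap.polar_neg_right] at h
  rw [sub_eq_add_neg, h]
  ring

theorem ncard_neighbours {Q : QuadraticForm F V} {U : Submodule F V}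
    (hU : ∀ x ∈ U, Q x = 0) (v z : V) :
    {x ∈ (v + ·) '' (U : Set V) | (affinePolarGraph Q).Adj z x}.ncard =
      {u : U | z - v ≠ u ∧ QuadraticMap.polar Q (z - v) u = Q (z - v)}.ncard := by
  have hinj : Function.Injective (fun u : U => v + (u : V)) := fun a b h => by
    simpa using h
  rw [← Set.ncard_image_of_injective _ hinj]
  congr 1
  have key : ∀ u ∈ U, ((affinePolarGraph Q).Adj z (v + u) ↔
      z - v ≠ u ∧ QuadraticMap.polar Q (z - v) u = Q (z - v)) := by
    intro u hu
    have h1 : Q (v + u - z) = Q (z - (v + u)) := by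
      rw [← QuadraticMap.map_neg, neg_sub]
    have h2 : Q (z - (v + u)) = Q (z - v) - QuadraticMap.polar Q (z - v) u := by
      rw [← map_sub_of_singular (hU u hu), sub_sub]
    rw [affinePolarGraph, SimpleGraph.fromRel_adj, h1, or_self, h2, sub_eq_zero,
      eq_comm (a := Q (z - v)), ne_eq, ne_eq, sub_eq_iff_eq_add']
  ext x
  constructor
  · rintro ⟨⟨u, hu, rfl⟩, hadj⟩
    exact ⟨⟨u, hu⟩, (key u hu).1 hadj, rfl⟩
  · rintro ⟨⟨u, hu⟩, h, rfl⟩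
    exact ⟨⟨u, hu, rfl⟩, (key u hu).2 h⟩

theorem ncard_fibre [Fintype F] [FiniteDimensional F V] (f : V →ₗ[F] F) (hf : f ≠ 0) (c : F) :
    {u : V | f u = c}.ncard = Fintype.card F ^ (finrank F V - 1) := by
  have hs : Function.Surjective f := LinearMap.surjective hf
  obtain ⟨a, rfl⟩ := hs c
  have hset : {u : V | f u = f a} = (a + ·) '' (LinearMap.ker f : Set V) := by
    ext u
    constructor
    · intro h
      refine ⟨u - a, ?_, by simp⟩
      simpa [sub_eq_zero] using h
    · rintro ⟨k, hk, rfl⟩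
      have hk' : f k = 0 := hk
      simp [hk']
  rw [hset, Set.ncard_image_of_injective _ (add_right_injective a)]
  have hr := f.finrank_range_add_finrank_ker
  rw [LinearMap.range_eq_top.2 hs, finrank_top, finrank_self] at hr
  have hk : finrank F V - 1 = finrank F (LinearMap.ker f) := by omega
  rw [hk, ← Nat.card_eq_fintype_card, ← Module.natCard_eq_pow_finrank]
  rfl

theorem finrank_sup_span [FiniteDimensional F V] (U : Submodule F V) {w : V} (hw : w ∉ U) :
    finrank F (U ⊔ F ∙ w : Submodule F V) = finrank F U + 1 := by
  have h := Submodule.finrank_sup_add_finrank_inf_eq U (F ∙ w)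
  have hw0 : w ≠ 0 := fun h => hw (h ▸ U.zero_mem)
  have hinf : U ⊓ F ∙ w = ⊥ := disjoint_iff.1 ((Submodule.disjoint_span_singleton' hw0).2 hw)
  rw [hinf, finrank_bot, finrank_span_singleton hw0] at h
  omega

theorem singular_sup_span {Q : QuadraticForm F V} {U : Submodule F V}
    (hU : ∀ x ∈ U, Q x = 0) {w : V} (hw : Q w = 0)
    (hperp : ∀ u ∈ U, QuadraticMap.polar Q w u = 0) :
    ∀ x ∈ U ⊔ F ∙ w, Q x = 0 := by
  intro x hx
  obtain ⟨u, hu, y, hy, rfl⟩ := Submodule.mem_sup.1 hx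
  obtain ⟨a, rfl⟩ := Submodule.mem_span_singleton.1 hy
  rw [QuadraticMap.map_add Q, hU u hu, QuadraticMap.map_smul, hw, QuadraticMap.polar_smul_right,
    QuadraticMap.polar_comm, hperp u hu]
  simp

end

/-- elliptic case: counting neighbours of a vertex `z` in the clique `v + U`,
where `U` is an `(m-1)`-dimensional totally singular subspace. -/
theorem stmt13 {F V : Type*} [Field F] [Fintype F] [AddCommGroup V] [Module F V] [Finite V]
    (q m : ℕ) (hq : Fintype.card F = q) (hm : 1 ≤ m) (hV : finrank F V = 2 * m)
    (Q : QuadraticForm F V)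
    (hnd : ∀ x : V, (∀ y : V, QuadraticMap.polar Q x y = 0) → x = 0)
    (hm2 : 2 ≤ m)
    (hell₁ : ∃ W : Submodule F V, (∀ x ∈ W, Q x = 0) ∧ finrank F W = m - 1)
    (hell₂ : ∀ W : Submodule F V, (∀ x ∈ W, Q x = 0) → finrank F W ≠ m)
    (U : Submodule F V) (hUts : ∀ x ∈ U, Q x = 0) (hUdim : finrank F U = m - 1)
    (v z : V)
    (Uperp : Set V) (hUperp : Uperp = {x : V | ∀ u ∈ U, QuadraticMap.polar Q x u = 0}) :
    (z ∈ (v + ·) '' (U : Set V) →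
      {x ∈ (v + ·) '' (U : Set V) | (affinePolarGraph Q).Adj z x}.ncard = q ^ (m - 1) - 1) ∧
    (z ∈ ((v + ·) '' Uperp) \ ((v + ·) '' (U : Set V)) →
      {x ∈ (v + ·) '' (U : Set V) | (affinePolarGraph Q).Adj z x}.ncard = 0) ∧
    (z ∉ (v + ·) '' Uperp →
      {x ∈ (v + ·) '' (U : Set V) | (affinePolarGraph Q).Adj z x}.ncard = q ^ (m - 2)) := by
  have : FiniteDimensional F V := Module.Finite.of_finite
  have : Finite U := inferInstance
  have hmem : ∀ S : Set V, z ∈ (v + ·) '' S ↔ z - v ∈ S := by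
    intro S
    constructor
    · rintro ⟨s, hs, rfl⟩
      simpa using hs
    · exact fun h => ⟨_, h, by simp⟩
  rw [Set.mem_sdiff, hmem, hmem, ncard_neighbours hUts, hUperp]
  generalize z - v = w
  refine ⟨fun hw => ?_, fun ⟨hperp, hw⟩ => ?_, fun hw => ?_⟩
  · have hset : {u : U | w ≠ u ∧ QuadraticMap.polar Q w u = Q w} = {(⟨w, hw⟩ : U)}ᶜ := by
      ext u
      have h1 := polar_eq_zero_of_singular hUts hw u.2
      simp [h1, hUts w hw, Subtype.ext_iff, eq_comm]
    rw [hset, Set.ncard_compl, Set.ncard_singleton, Module.natCard_eq_pow_finrank (K := F), hUdim,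
      Nat.card_eq_fintype_card, hq]
  · rw [Set.ncard_eq_zero, Set.eq_empty_iff_forall_notMem]
    rintro u ⟨-, hu⟩
    rw [hperp u u.2] at hu
    refine hell₂ _ (singular_sup_span hUts hu.symm hperp) ?_
    rw [finrank_sup_span U hw, hUdim]
    omega
  · have hwU : w ∉ U := fun h => hw fun u hu => polar_eq_zero_of_singular hUts h hu
    let f : U →ₗ[F] F := (Q.polarBilin w).domRestrict U
    have hf : f ≠ 0 := fun h => hw fun u hu => LinearMap.congr_fun h ⟨u, hu⟩
    have hset : {u : U | w ≠ u ∧ QuadraticMap.polar Q w u = Q w} = {u : U | f u = Q w} := by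
      ext u
      exact and_iff_right fun h => hwU (h ▸ u.2)
    rw [hset, ncard_fibre f hf, hUdim, hq, Nat.sub_sub]
end
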